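/- arXiv:1801.00884 — 4 statements merged into one kernel-verified Lean document; each statement's English description precedes it below -/
import Mathlib

section
/- Let H be the Bethe–Salpeter matrix and suppose H·x = λ·x with x ∈ ℂ^{2n}. Then (conj(λ), (Γ₀·x)ᴴ) and (−λ, (Γ₀·Π·x)ᵀ) are left eigenpairs of H; that is, (Γ₀·x)ᴴ·H = conj(λ)·(Γ₀·x)ᴴ (equivalently Hᴴ·(Γ₀·x) = λ·(Γ₀·x)) and (Γ₀·Π·x)ᵀ·H = −λ·(Γ₀·Π·x)ᵀ (equivalently Hᵀ·(Γ₀·Π·x) = −λ·(Γ₀·Π·x)). -/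
open Matrix Complex

noncomputable section

/-- The matrix Π = [[0, I],[I, 0]]. -/
def PiMat (n : ℕ) : Matrix (Fin n ⊕ Fin n) (Fin n ⊕ Fin n) ℂ :=
  Matrix.fromBlocks 0 1 1 0

/-- The matrix Γ₀ = diag(I, −I). -/
def GammaZero (n : ℕ) : Matrix (Fin n ⊕ Fin n) (Fin n ⊕ Fin n) ℂ :=
  Matrix.fromBlocks 1 0 0 (-1)

/-- Entrywise complex conjugate of a matrix. -/
def mconj {α β : Type*} (M : Matrix α β ℂ) : Matrix α β ℂ :=
  M.map (starRingEnd ℂ)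

/-- The Bethe–Salpeter matrix H = [[A, B],[−conj B, −conj A]]. -/
def BSmat {n : ℕ} (A B : Matrix (Fin n) (Fin n) ℂ) :
    Matrix (Fin n ⊕ Fin n) (Fin n ⊕ Fin n) ℂ :=
  Matrix.fromBlocks A B (-(mconj B)) (-(mconj A))

/-- Membership in 𝔾_{2k}: Γ = diag(J, −J) with J diagonal with ±1 entries. -/
def IsGammaMat {k : ℕ} (Γ : Matrix (Fin k ⊕ Fin k) (Fin k ⊕ Fin k) ℂ) : Prop :=
  ∃ d : Fin k → ℂ, (∀ i, d i = 1 ∨ d i = -1) ∧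
    Γ = Matrix.fromBlocks (Matrix.diagonal d) 0 0 (-(Matrix.diagonal d))

/-- G is a Π^ε-matrix (ε = 1 : Π⁺, ε = −1 : Π⁻): G·Π_{2m} = ε·Π_{2n}·conj(G). -/
def IsPiMat {n m : ℕ} (ε : ℂ) (G : Matrix (Fin n ⊕ Fin n) (Fin m ⊕ Fin m) ℂ) : Prop :=
  G * PiMat m = ε • (PiMat n * mconj G)

/-- R is Π^ε-upper triangular. -/
def IsPiUpperTri {n m : ℕ} (ε : ℂ) (R : Matrix (Fin n ⊕ Fin n) (Fin m ⊕ Fin m) ℂ) : Prop :=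
  ∃ R₁ R₂ : Matrix (Fin n) (Fin m) ℂ,
    R = Matrix.fromBlocks R₁ R₂ (ε • mconj R₂) (ε • mconj R₁) ∧
    (∀ (i : Fin n) (j : Fin m), (j : ℕ) < (i : ℕ) → R₁ i j = 0) ∧
    (∀ (i : Fin n) (j : Fin m), (j : ℕ) ≤ (i : ℕ) → R₂ i j = 0)

/-- The i-th Π⁻-leading principal minor of a 2m×2m matrix. -/
def piLeadingMinor {m : ℕ} (M : Matrix (Fin m ⊕ Fin m) (Fin m ⊕ Fin m) ℂ)
    (i : ℕ) (h : i ≤ m) : ℂ :=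
  (Matrix.fromBlocks
    ((M.toBlocks₁₁).submatrix (Fin.castLE h) (Fin.castLE h))
    ((M.toBlocks₁₂).submatrix (Fin.castLE h) (Fin.castLE h))
    ((M.toBlocks₂₁).submatrix (Fin.castLE h) (Fin.castLE h))
    ((M.toBlocks₂₂).submatrix (Fin.castLE h) (Fin.castLE h))).det

/-!
Two symmetries of `H` carry right eigenvectors to left ones: `H` is self-adjoint for the indefinite
form given by `Γ₀`, that is `Hᴴ Γ₀ = Γ₀ H`, and it is a `Π⁻`-matrix, that is `H Π = -Π conj(H)`.
Conjugating the first identity and moving `conj(H)` past `Π` with the second gives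
`Hᵀ (Γ₀ Π) = (Γ₀ Π) (-H)`. An identity `M P = P N` makes `P` map eigenvectors of `N` to eigenvectors
of `M` with the same eigenvalue.
-/

section Eigenvectors

variable {m n R : Type*} [Fintype m] [Fintype n] [CommSemiring R]

theorem mulVec_mulVec_eq_smul_of_mul_eq_mul {M : Matrix m m R} {N : Matrix n n R}
    {P : Matrix m n R} (h : M * P = P * N) {c : R} {x : n → R} (hx : N *ᵥ x = c • x) :
    M *ᵥ (P *ᵥ x) = c • (P *ᵥ x) := by
  rw [mulVec_mulVec, h, ← mulVec_mulVec, hx, mulVec_smul]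

theorem star_vecMul_eq_star_smul_iff [StarRing R] {M : Matrix n n R} {c : R} {y : n → R} :
    star y ᵥ* M = star c • star y ↔ Mᴴ *ᵥ y = c • y := by
  rw [← star_inj, star_vecMul, star_smul, star_star, star_star]

end Eigenvectors

section EntrywiseConjugate

variable {m n p : Type*}

theorem mconj_mconj (M : Matrix m n ℂ) : mconj (mconj M) = M := by
  ext i j
  exact Complex.conj_conj (M i j)

theorem conjTranspose_mconj (M : Matrix m n ℂ) : (mconj M)ᴴ = Mᵀ :=
  congrArg transpose (mconj_mconj M)

theorem mconj_conjTranspose (M : Matrix m n ℂ) : mconj Mᴴ = Mᵀ :=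
  mconj_mconj Mᵀ

theorem mconj_mul [Fintype n] (M : Matrix m n ℂ) (N : Matrix n p ℂ) :
    mconj (M * N) = mconj M * mconj N :=
  Matrix.map_mul

theorem mconj_smul (c : ℂ) (M : Matrix m n ℂ) : mconj (c • M) = starRingEnd ℂ c • mconj M :=
  Matrix.map_smulₛₗ _ _ c (map_mul _ c) M

theorem mconj_neg (M : Matrix m n ℂ) : mconj (-M) = -mconj M :=
  Matrix.map_neg _ (map_neg _) M

theorem mconj_fromBlocks {l : Type*} (A : Matrix m n ℂ) (B : Matrix m p ℂ) (C : Matrix l n ℂ)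
    (D : Matrix l p ℂ) :
    mconj (fromBlocks A B C D) = fromBlocks (mconj A) (mconj B) (mconj C) (mconj D) :=
  fromBlocks_map A B C D _

end EntrywiseConjugate

theorem mconj_PiMat (n : ℕ) : mconj (PiMat n) = PiMat n := by
  rw [PiMat, mconj_fromBlocks]
  simp [mconj]

theorem mconj_GammaZero (n : ℕ) : mconj (GammaZero n) = GammaZero n := by
  rw [GammaZero, mconj_fromBlocks, mconj_neg]
  simp [mconj]

theorem IsPiMat.mconj_mul_PiMat {n m : ℕ} {ε : ℂ} {G : Matrix (Fin n ⊕ Fin n) (Fin m ⊕ Fin m) ℂ}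
    (hG : IsPiMat ε G) : mconj G * PiMat m = starRingEnd ℂ ε • (PiMat n * G) := by
  simpa only [mconj_mul, mconj_smul, mconj_PiMat, mconj_mconj] using congrArg mconj hG

theorem IsPiMat.transpose_mul_mul_PiMat {n : ℕ} {ε : ℂ}
    {H Γ : Matrix (Fin n ⊕ Fin n) (Fin n ⊕ Fin n) ℂ} (hH : IsPiMat ε H) (hΓ : mconj Γ = Γ)
    (hHΓ : Hᴴ * Γ = Γ * H) : Hᵀ * (Γ * PiMat n) = starRingEnd ℂ ε • (Γ * PiMat n * H) := by
  have hconj : Hᵀ * Γ = Γ * mconj H := by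
    simpa only [mconj_mul, mconj_conjTranspose, hΓ] using congrArg mconj hHΓ
  calc Hᵀ * (Γ * PiMat n) = Γ * (mconj H * PiMat n) := by
        rw [← Matrix.mul_assoc, hconj, Matrix.mul_assoc]
    _ = starRingEnd ℂ ε • (Γ * PiMat n * H) := by
        rw [hH.mconj_mul_PiMat, Matrix.mul_smul, Matrix.mul_assoc]

theorem isPiMat_BSmat {n : ℕ} (A B : Matrix (Fin n) (Fin n) ℂ) : IsPiMat (-1) (BSmat A B) := by
  simp [IsPiMat, BSmat, PiMat, mconj_fromBlocks, mconj_neg, mconj_mconj, fromBlocks_multiply,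
    fromBlocks_neg]

section HermitianSymmetricBlocks

variable {n : ℕ} {A B : Matrix (Fin n) (Fin n) ℂ}

theorem conjTranspose_BSmat_mul_GammaZero (hA : A.IsHermitian) (hB : B.IsSymm) :
    (BSmat A B)ᴴ * GammaZero n = GammaZero n * BSmat A B := by
  have hAconj : Aᵀ = mconj A := by rw [← mconj_conjTranspose, hA.eq]
  have hBconj : Bᴴ = mconj B := congrArg mconj hB.eq
  simp [BSmat, GammaZero, fromBlocks_conjTranspose, fromBlocks_multiply, conjTranspose_mconj,
    hA.eq, hB.eq, hAconj, hBconj]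

theorem transpose_BSmat_mul_GammaZero_mul_PiMat (hA : A.IsHermitian) (hB : B.IsSymm) :
    (BSmat A B)ᵀ * (GammaZero n * PiMat n) = GammaZero n * PiMat n * -BSmat A B := by
  simpa using (isPiMat_BSmat A B).transpose_mul_mul_PiMat (mconj_GammaZero n)
    (conjTranspose_BSmat_mul_GammaZero hA hB)

end HermitianSymmetricBlocks

/-- If H·x = λ·x then (conj(λ), (Γ₀x)ᴴ) and (−λ, (Γ₀Πx)ᵀ) are left
eigenpairs of H. -/
theorem stmt3 (n : ℕ) (hn : 0 < n) (A B : Matrix (Fin n) (Fin n) ℂ)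
    (hA : Aᴴ = A) (hB : Bᵀ = B)
    (l : ℂ) (x : (Fin n ⊕ Fin n) → ℂ)
    (heig : (BSmat A B).mulVec x = l • x) :
    (Matrix.vecMul (star ((GammaZero n).mulVec x)) (BSmat A B) =
        (starRingEnd ℂ l) • star ((GammaZero n).mulVec x)) ∧
    ((BSmat A B)ᴴ.mulVec ((GammaZero n).mulVec x) = l • (GammaZero n).mulVec x) ∧
    (Matrix.vecMul ((GammaZero n * PiMat n).mulVec x) (BSmat A B) =
        (-l) • ((GammaZero n * PiMat n).mulVec x)) ∧
    ((BSmat A B)ᵀ.mulVec ((GammaZero n * PiMat n).mulVec x) =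
        (-l) • ((GammaZero n * PiMat n).mulVec x)) := by
  have hconj : (BSmat A B)ᴴ *ᵥ (GammaZero n *ᵥ x) = l • (GammaZero n *ᵥ x) :=
    mulVec_mulVec_eq_smul_of_mul_eq_mul (conjTranspose_BSmat_mul_GammaZero hA hB) heig
  have hneg : -BSmat A B *ᵥ x = -l • x := by rw [neg_mulVec, heig, neg_smul]
  have htrans : (BSmat A B)ᵀ *ᵥ ((GammaZero n * PiMat n) *ᵥ x) =
      -l • ((GammaZero n * PiMat n) *ᵥ x) :=
    mulVec_mulVec_eq_smul_of_mul_eq_mul (transpose_BSmat_mul_GammaZero_mul_PiMat hA hB) hneg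
  exact ⟨star_vecMul_eq_star_smul_iff.mpr hconj, hconj, (mulVec_transpose _ _).symm.trans htrans,
    htrans⟩

end
end

section
/- Let n ≥ m be positive integers, let G ∈ ℂ^{2n×2m} be a Π⁺-matrix (or a Π⁻-matrix) of full column rank, and let Γ ∈ 𝔾_{2n}. Then G has a ΓQR factorization with respect to Γ if and only if no Π⁻-leading principal minor of GᴴΓG (which is a 2m×2m Π⁻-matrix) vanishes. -/
open Matrix Complex

noncomputable section

/-- A ΓQR factorization of a Π^ε-matrix G with respect to Γ: G = Q·R where Q is
Γ-unitary (a Π⁺-matrix with QᴴΓQ ∈ 𝔾_{2n}) and R is Π^ε-upper triangular. -/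
def IsGammaQR {n m : ℕ} (ε : ℂ) (Γ : Matrix (Fin n ⊕ Fin n) (Fin n ⊕ Fin n) ℂ)
    (G : Matrix (Fin n ⊕ Fin n) (Fin m ⊕ Fin m) ℂ)
    (Q : Matrix (Fin n ⊕ Fin n) (Fin n ⊕ Fin n) ℂ)
    (R : Matrix (Fin n ⊕ Fin n) (Fin m ⊕ Fin m) ℂ) : Prop :=
  G = Q * R ∧ IsPiMat 1 Q ∧ IsGammaMat (Qᴴ * Γ * Q) ∧ IsPiUpperTri ε R

/-! Let `B x y = xᴴ Γ y` and `s x = Π x̄`, so that the columns of `G` are vectors `g j` together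
with `± s (g j)`. Then `B (s x) (s y)` is minus the conjugate of `B x y`, and hence
`B x (s x) = 0`: the Gram–Schmidt process can treat the pairs `g j, s (g j)` one at a time, and it
breaks down only at an isotropic residual. The `Π⁻`-leading principal minors of `Gᴴ Γ G` are the
Gram determinants of the flag spanned by these pairs, so if none vanishes the process runs through.
By polarization the orthogonal complement of a proper step always contains a non-isotropic vector,
which allows the flag to be continued to all of `ℂ^{2n}`; normalizing the residuals gives `Q`.

Conversely, `G = Q R` gives `Gᴴ Γ G = Rᴴ D R` with `D` a diagonal matrix of signs. Since `R` is
triangular, each leading minor is a sign times the squared modulus of the corresponding minor of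
`R`, which is nonzero by full rank. -/

section HermitianForm

variable {𝕜 E : Type*} [RCLike 𝕜] [AddCommGroup E] [Module 𝕜 E]
  {B : E →ₗ⋆[𝕜] E →ₗ[𝕜] 𝕜}

lemma le_orthogonalBilin_of_forall_apply_self_eq_zero (hB : B.IsSymm) {U : Submodule 𝕜 E}
    (hU : ∀ u ∈ U, B u u = 0) : U ≤ U.orthogonalBilin B := by
  intro y hy x hx
  have polar : B (x + star (B x y) • y) (x + star (B x y) • y) = 0 :=
    hU _ (U.add_mem hx (U.smul_mem _ hy))
  have double : 2 * (B x y * star (B x y)) = 0 := by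
    simpa [hU x hx, hU y hy, ← hB.eq x y, two_mul, mul_comm] using polar
  simpa using double

lemma exists_mem_orthogonalBilin_apply_self_ne_zero (hB : B.IsSymm) (hnd : B.SeparatingLeft)
    {W : Submodule 𝕜 E} (hW : Codisjoint W (W.orthogonalBilin B)) (hW_top : W ≠ ⊤) :
    ∃ v ∈ W.orthogonalBilin B, B v v ≠ 0 := by
  by_contra! isotropic
  have self_orth := le_orthogonalBilin_of_forall_apply_self_eq_zero hB isotropic
  have orth_eq_bot : W.orthogonalBilin B = ⊥ := by
    refine (Submodule.eq_bot_iff _).2 fun u hu => hnd u fun x => ?_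
    obtain ⟨p, y, hp, hy, rfl⟩ := Submodule.codisjoint_iff_exists_add_eq.1 hW x
    rw [map_add, hB.isRefl _ _ (hu p hp), self_orth hy u hu, add_zero]
  exact hW_top (codisjoint_bot.1 (orth_eq_bot ▸ hW))

lemma codisjoint_orthogonalBilin_sup_span_singleton {W : Submodule 𝕜 E}
    (hW : Codisjoint W (W.orthogonalBilin B)) {v : E} (hv : v ∈ W.orthogonalBilin B)
    (hvv : B v v ≠ 0) :
    Codisjoint (W ⊔ 𝕜 ∙ v) ((W ⊔ 𝕜 ∙ v).orthogonalBilin B) := by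
  refine Submodule.codisjoint_iff_exists_add_eq.2 fun x => ?_
  obtain ⟨p, y, hp, hy, rfl⟩ := Submodule.codisjoint_iff_exists_add_eq.1 hW x
  refine ⟨p + (B v y / B v v) • v, y - (B v y / B v v) • v,
    Submodule.add_mem_sup hp (Submodule.mem_span_singleton.2 ⟨_, rfl⟩), fun z hz => ?_, by abel⟩
  obtain ⟨w, hw, _, ⟨c, rfl⟩, rfl⟩ := by
    simpa only [Submodule.mem_sup, Submodule.mem_span_singleton] using hz
  simp [hy w hw, hv w hw, hvv]

lemma exists_smul_apply_self_eq_one_or_neg_one (hB : B.IsSymm) {v : E} (hv : B v v ≠ 0) :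
    ∃ c : 𝕜, B (c • v) (c • v) = 1 ∨ B (c • v) (c • v) = -1 := by
  obtain ⟨r, hr⟩ := RCLike.conj_eq_iff_real.1 (hB.eq v v)
  have hr0 : r ≠ 0 := by rintro rfl; exact hv (by simpa using hr)
  have scaled : B (((√|r|)⁻¹ : 𝕜) • v) (((√|r|)⁻¹ : 𝕜) • v) = ((r / |r| : ℝ) : 𝕜) := by
    rw [LinearMap.map_smulₛₗ₂, map_smul, hr, smul_eq_mul, smul_eq_mul, map_inv₀,
      RCLike.conj_ofReal, ← mul_assoc, ← mul_inv, ← RCLike.ofReal_mul,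
      Real.mul_self_sqrt (abs_nonneg r), RCLike.ofReal_div, inv_mul_eq_div]
  refine ⟨((√|r|)⁻¹ : 𝕜), ?_⟩
  rw [scaled]
  rcases abs_choice r with h | h <;> simp [h, hr0]

end HermitianForm

section GramSchmidt

variable {𝕜 E : Type*} [RCLike 𝕜] [AddCommGroup E] [Module 𝕜 E]

/-- A conjugate-linear involution `s` that turns the Hermitian form `B` into minus its conjugate.
This abstracts the map `x ↦ Π x̄` acting on the form `xᴴ Γ y`. -/
structure IsSkewConjugation (B : E →ₗ⋆[𝕜] E →ₗ[𝕜] 𝕜) (s : E →ₗ⋆[𝕜] E) : Prop where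
  isSymm : B.IsSymm
  involutive : Function.Involutive s
  apply_conj_conj (x y : E) : B (s x) (s y) = -star (B x y)

/-- The span of `g 0, s (g 0), …, g (k - 1), s (g (k - 1))`. -/
def conjSpan (s : E →ₗ⋆[𝕜] E) (g : ℕ → E) (k : ℕ) : Submodule 𝕜 E :=
  Submodule.span 𝕜 (Set.range (Sum.elim (fun j : Fin k => g j) fun j : Fin k => s (g j)))

/-- The Gram–Schmidt process for `B` runs on the pairs `g j, s (g j)`, `j < m`, without meeting an
isotropic residual. -/
def IsGramSchmidtRegular (B : E →ₗ⋆[𝕜] E →ₗ[𝕜] 𝕜) (s : E →ₗ⋆[𝕜] E) (g : ℕ → E) (m : ℕ) : Prop :=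
  ∀ k < m, ∃ v ∈ (conjSpan s g k).orthogonalBilin B, g k - v ∈ conjSpan s g k ∧ B v v ≠ 0

/-- The vectors `q i, s (q i)` are the columns of a `Γ`-orthonormal matrix: their Gram matrix with
respect to `B` is `diag(J, -J)` with `J` a diagonal matrix of signs. -/
structure IsGammaOrthonormal {ι : Type*} (B : E →ₗ⋆[𝕜] E →ₗ[𝕜] 𝕜) (s : E →ₗ⋆[𝕜] E)
    (q : ι → E) : Prop where
  apply_self (i : ι) : B (q i) (q i) = 1 ∨ B (q i) (q i) = -1
  isOrthoᵢ : B.IsOrthoᵢ q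
  apply_conj (i j : ι) : B (q i) (s (q j)) = 0

variable {B : E →ₗ⋆[𝕜] E →ₗ[𝕜] 𝕜} {s : E →ₗ⋆[𝕜] E} {g : ℕ → E} {k m n : ℕ}

namespace IsSkewConjugation

lemma apply_conj_right (hs : IsSkewConjugation B s) (x y : E) :
    B x (s y) = -star (B (s x) y) := by
  rw [← hs.apply_conj_conj, hs.involutive x]

lemma apply_self_conj (hs : IsSkewConjugation B s) (x : E) : B x (s x) = 0 := by
  have h := hs.apply_conj_right x x
  rw [← starRingEnd_apply, hs.isSymm.eq, self_eq_neg] at h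
  exact h

lemma conj_mem_orthogonalBilin (hs : IsSkewConjugation B s) {W : Submodule 𝕜 E}
    (hW : ∀ x ∈ W, s x ∈ W) {v : E} (hv : v ∈ W.orthogonalBilin B) :
    s v ∈ W.orthogonalBilin B := fun x hx => by
  rw [hs.apply_conj_right, hv _ (hW x hx), star_zero, neg_zero]

end IsSkewConjugation

lemma mem_conjSpan {j : ℕ} (hj : j < k) : g j ∈ conjSpan s g k :=
  Submodule.subset_span ⟨Sum.inl (⟨j, hj⟩ : Fin k), rfl⟩

lemma conj_mem_conjSpan {j : ℕ} (hj : j < k) : s (g j) ∈ conjSpan s g k :=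
  Submodule.subset_span ⟨Sum.inr (⟨j, hj⟩ : Fin k), rfl⟩

lemma conjSpan_le {U : Submodule 𝕜 E} (hU : ∀ j < k, g j ∈ U ∧ s (g j) ∈ U) :
    conjSpan s g k ≤ U := by
  rw [conjSpan, Submodule.span_le, Set.range_subset_iff, Sum.forall]
  exact ⟨fun j => (hU j j.2).1, fun j => (hU j j.2).2⟩

lemma conjSpan_mono : Monotone (conjSpan s g) := fun _ _ hkl =>
  conjSpan_le fun _ hj => ⟨mem_conjSpan (hj.trans_le hkl), conj_mem_conjSpan (hj.trans_le hkl)⟩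

lemma conjSpan_congr {g' : ℕ → E} (h : ∀ j < k, g' j = g j) :
    conjSpan s g' k = conjSpan s g k := by
  simp only [conjSpan, h _ (Fin.isLt _)]

lemma map_mem_conjSpan (hs : Function.Involutive s) {x : E} (hx : x ∈ conjSpan s g k) :
    s x ∈ conjSpan s g k := by
  have hle : conjSpan s g k ≤ (conjSpan s g k).comap s := conjSpan_le fun j hj =>
    ⟨conj_mem_conjSpan hj, by simpa [hs (g j)] using mem_conjSpan hj⟩
  exact hle hx

lemma conjSpan_succ_of_sub_mem (hs : Function.Involutive s) {v : E}
    (hv : g k - v ∈ conjSpan s g k) :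
    conjSpan s g (k + 1) = conjSpan s g k ⊔ 𝕜 ∙ v ⊔ 𝕜 ∙ s v := by
  have hsv : s (g k) - s v ∈ conjSpan s g k := map_sub s (g k) v ▸ map_mem_conjSpan hs hv
  have hle : conjSpan s g k ≤ conjSpan s g (k + 1) := conjSpan_mono k.le_succ
  have hWle : conjSpan s g k ≤ conjSpan s g k ⊔ 𝕜 ∙ v ⊔ 𝕜 ∙ s v := le_sup_left.trans le_sup_left
  apply le_antisymm
  · refine conjSpan_le fun j hj => ?_
    rcases Nat.lt_succ_iff_lt_or_eq.1 hj with hj | rfl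
    · exact ⟨hWle (mem_conjSpan hj), hWle (conj_mem_conjSpan hj)⟩
    · have hv_mem : v ∈ conjSpan s g j ⊔ 𝕜 ∙ v ⊔ 𝕜 ∙ s v :=
        Submodule.mem_sup_left (Submodule.mem_sup_right (Submodule.mem_span_singleton_self v))
      have hsv_mem : s v ∈ conjSpan s g j ⊔ 𝕜 ∙ v ⊔ 𝕜 ∙ s v :=
        Submodule.mem_sup_right (Submodule.mem_span_singleton_self _)
      exact ⟨(Submodule.sub_mem_iff_left _ hv_mem).1 (hWle hv),
        (Submodule.sub_mem_iff_left _ hsv_mem).1 (hWle hsv)⟩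
  · refine sup_le (sup_le hle ?_) ?_ <;> rw [Submodule.span_singleton_le_iff_mem]
    · exact (Submodule.sub_mem_iff_right _ (mem_conjSpan k.lt_succ_self)).1 (hle hv)
    · exact (Submodule.sub_mem_iff_right _ (conj_mem_conjSpan k.lt_succ_self)).1 (hle hsv)

lemma conjSpan_ne_top (hk : 2 * k < Module.finrank 𝕜 E) : conjSpan s g k ≠ ⊤ := fun htop => by
  have hcard : Module.finrank 𝕜 (conjSpan s g k) ≤ Fintype.card (Fin k ⊕ Fin k) :=
    finrank_range_le_card (R := 𝕜) _
  rw [htop, finrank_top, Fintype.card_sum, Fintype.card_fin] at hcard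
  omega

lemma apply_conj_eq_zero_of_sub_mem (hs : IsSkewConjugation B s) {v x : E}
    (hv : v ∈ (conjSpan s g k).orthogonalBilin B) (hxv : x - v ∈ conjSpan s g k) :
    B v (s x) = 0 := by
  rw [← sub_add_cancel x v, map_add, map_add, hs.apply_self_conj, add_zero]
  exact hs.isSymm.isRefl _ _ (hv _ (map_mem_conjSpan hs.involutive hxv))

namespace IsGramSchmidtRegular

lemma codisjoint_orthogonalBilin (hs : IsSkewConjugation B s) (hg : IsGramSchmidtRegular B s g m) :
    Codisjoint (conjSpan s g m) ((conjSpan s g m).orthogonalBilin B) := by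
  induction m with
  | zero =>
    have orth_eq_top : (conjSpan s g 0).orthogonalBilin B = ⊤ := by
      simp [conjSpan, Submodule.eq_top_iff', Set.range_eq_empty]
    exact orth_eq_top ▸ codisjoint_top_right
  | succ k ih =>
    obtain ⟨v, hv, hgv, hvv⟩ := hg k k.lt_succ_self
    have hsv : s v ∈ (conjSpan s g k ⊔ 𝕜 ∙ v).orthogonalBilin B := fun x hx => by
      obtain ⟨w, hw, _, ⟨c, rfl⟩, rfl⟩ := by
        simpa only [Submodule.mem_sup, Submodule.mem_span_singleton] using hx
      have hws := hs.conj_mem_orthogonalBilin (fun _ => map_mem_conjSpan hs.involutive) hv w hw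
      simp [hws, hs.apply_self_conj]
    have hsvv : B (s v) (s v) ≠ 0 := by
      rw [hs.apply_conj_conj]
      exact neg_ne_zero.2 (star_ne_zero.2 hvv)
    rw [conjSpan_succ_of_sub_mem hs.involutive hgv]
    exact codisjoint_orthogonalBilin_sup_span_singleton
      (codisjoint_orthogonalBilin_sup_span_singleton (ih fun j hj => hg j (hj.trans k.lt_succ_self))
        hv hvv) hsv hsvv

lemma of_disjoint (hs : IsSkewConjugation B s)
    (hdisj : ∀ k < m, Disjoint (conjSpan s g (k + 1)) ((conjSpan s g (k + 1)).orthogonalBilin B))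
    (hg : ∀ k < m, g k ∉ conjSpan s g k) : IsGramSchmidtRegular B s g m := by
  intro k
  induction k using Nat.strong_induction_on with
  | _ k ih =>
    intro hk
    obtain ⟨p, v, hp, hv, hpv⟩ := Submodule.codisjoint_iff_exists_add_eq.1
      (codisjoint_orthogonalBilin hs fun j hj => ih j hj (hj.trans hk)) (g k)
    have hgv : g k - v ∈ conjSpan s g k := by rwa [← hpv, add_sub_cancel_right]
    -- An isotropic residual `v` would be orthogonal to the whole next step of the flag.
    refine ⟨v, hv, hgv, fun hvv => hg k hk ?_⟩
    have hv_mem : v ∈ conjSpan s g (k + 1) :=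
      (Submodule.sub_mem_iff_right _ (mem_conjSpan k.lt_succ_self)).1 (conjSpan_mono k.le_succ hgv)
    have hv_orth : ∀ x ∈ conjSpan s g (k + 1), B x v = 0 := fun x hx => by
      rw [conjSpan_succ_of_sub_mem hs.involutive hgv] at hx
      simp only [Submodule.mem_sup, Submodule.mem_span_singleton] at hx
      obtain ⟨_, ⟨w, hw, _, ⟨a, rfl⟩, rfl⟩, _, ⟨b, rfl⟩, rfl⟩ := hx
      simp [hv w hw, hvv, hs.isSymm.isRefl _ _ (hs.apply_self_conj v)]
    have hv0 : v = 0 := Submodule.disjoint_def.1 (hdisj k hk) v hv_mem hv_orth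
    simpa [hv0] using hgv

lemma exists_extension (hs : IsSkewConjugation B s) (hnd : B.SeparatingLeft)
    (hg : IsGramSchmidtRegular B s g m) (hmn : m ≤ n) (hn : 2 * n ≤ Module.finrank 𝕜 E) :
    ∃ g' : ℕ → E, (∀ j < m, g' j = g j) ∧ IsGramSchmidtRegular B s g' n := by
  induction n, hmn using Nat.le_induction with
  | base => exact ⟨g, fun _ _ => rfl, hg⟩
  | succ n hmn ih =>
    obtain ⟨g', hgg', hg'⟩ := ih (by omega)
    obtain ⟨w, hw, hww⟩ := exists_mem_orthogonalBilin_apply_self_ne_zero hs.isSymm hnd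
      (hg'.codisjoint_orthogonalBilin hs) (conjSpan_ne_top (by omega))
    have hupdate : ∀ j < n, Function.update g' n w j = g' j := fun j hj =>
      Function.update_of_ne hj.ne _ _
    refine ⟨Function.update g' n w, fun j hj => ?_, fun k hk => ?_⟩
    · rw [hupdate j (hj.trans_le hmn), hgg' j hj]
    · rw [conjSpan_congr fun j hj => hupdate j (by omega)]
      rcases Nat.lt_succ_iff_lt_or_eq.1 hk with hk | rfl
      · rw [hupdate k hk]
        exact hg' k hk
      · exact ⟨w, hw, by simp, hww⟩

lemma exists_normalized_residual (hs : IsSkewConjugation B s) (hg : IsGramSchmidtRegular B s g m)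
    (hk : k < m) :
    ∃ q ∈ conjSpan s g (k + 1), q ∈ (conjSpan s g k).orthogonalBilin B ∧
      B q (s (g k)) = 0 ∧ (B q q = 1 ∨ B q q = -1) := by
  obtain ⟨v, hv, hgv, hvv⟩ := hg k hk
  obtain ⟨c, hc⟩ := exists_smul_apply_self_eq_one_or_neg_one hs.isSymm hvv
  have hv_mem : v ∈ conjSpan s g (k + 1) :=
    (Submodule.sub_mem_iff_right _ (mem_conjSpan k.lt_succ_self)).1 (conjSpan_mono k.le_succ hgv)
  exact ⟨c • v, Submodule.smul_mem _ c hv_mem, Submodule.smul_mem _ c hv,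
    by simp [apply_conj_eq_zero_of_sub_mem hs hv hgv], hc⟩

lemma exists_isGammaOrthonormal (hs : IsSkewConjugation B s) (hg : IsGramSchmidtRegular B s g n) :
    ∃ q : Fin n → E, IsGammaOrthonormal B s q ∧
      ∀ i : Fin n, q i ∈ (conjSpan s g i).orthogonalBilin B ∧ B (q i) (s (g i)) = 0 := by
  -- `q i` lies in step `i + 1` of the flag and is orthogonal to step `i`, so the orthogonality of
  -- the family follows by comparing indices, without recursion.
  choose q q_mem q_orth q_conj q_self using
    fun i : Fin n => hg.exists_normalized_residual hs i.2
  have q_mem_of_lt : ∀ {i j : Fin n}, i < j → q i ∈ conjSpan s g j := fun hij =>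
    conjSpan_mono (Nat.succ_le_of_lt hij) (q_mem _)
  refine ⟨q, ⟨q_self, fun i j hij => ?_, fun i j => ?_⟩, fun i => ⟨q_orth i, q_conj i⟩⟩
  · rcases hij.lt_or_gt with hij | hij
    · exact q_orth j _ (q_mem_of_lt hij)
    · exact hs.isSymm.isRefl _ _ (q_orth i _ (q_mem_of_lt hij))
  · have conj_stable : ∀ k, ∀ x ∈ conjSpan s g k, s x ∈ conjSpan s g k := fun k _ =>
      map_mem_conjSpan hs.involutive
    rcases lt_trichotomy i j with hij | rfl | hij
    · exact hs.conj_mem_orthogonalBilin (conj_stable j) (q_orth j) _ (q_mem_of_lt hij)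
    · exact hs.apply_self_conj _
    · exact hs.isSymm.isRefl _ _ (q_orth i _ (conj_stable i _ (q_mem_of_lt hij)))

end IsGramSchmidtRegular

theorem exists_isGammaOrthonormal_of_le (hs : IsSkewConjugation B s) (hnd : B.SeparatingLeft)
    (hg : IsGramSchmidtRegular B s g m) (hmn : m ≤ n) (hn : 2 * n ≤ Module.finrank 𝕜 E) :
    ∃ q : Fin n → E, IsGammaOrthonormal B s q ∧ ∀ (i : Fin n), ∀ j < m,
      (j < i → B (q i) (g j) = 0) ∧ (j ≤ i → B (q i) (s (g j)) = 0) := by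
  obtain ⟨g', hgg', hg'⟩ := hg.exists_extension hs hnd hmn hn
  obtain ⟨q, hq, hqg⟩ := hg'.exists_isGammaOrthonormal hs
  refine ⟨q, hq, fun i j hj => hgg' j hj ▸ ⟨fun hji => ?_, fun hji => ?_⟩⟩
  · exact hs.isSymm.isRefl _ _ ((hqg i).1 _ (mem_conjSpan hji))
  · rcases hji.lt_or_eq with hji | rfl
    · exact hs.isSymm.isRefl _ _ ((hqg i).1 _ (conj_mem_conjSpan hji))
    · exact (hqg i).2

end GramSchmidt

section Gram

variable {K E ι : Type*} [Field K] [AddCommGroup E] [Module K E] [Fintype ι] [DecidableEq ι]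
  {σ : K →+* K} {B : E →ₛₗ[σ] E →ₗ[K] K} {w : ι → E}

lemma eq_zero_of_gram_det_ne_zero (hdet : (Matrix.of fun i j => B (w i) (w j)).det ≠ 0)
    {c : ι → K} (hc : ∀ i, B (w i) (∑ j, c j • w j) = 0) : c = 0 :=
  Matrix.eq_zero_of_mulVec_eq_zero hdet <| funext fun i => by
    simpa [Matrix.mulVec, dotProduct, mul_comm] using hc i

lemma linearIndependent_of_gram_det_ne_zero
    (hdet : (Matrix.of fun i j => B (w i) (w j)).det ≠ 0) : LinearIndependent K w :=
  Fintype.linearIndependent_iff.2 fun _ hc =>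
    congrFun (eq_zero_of_gram_det_ne_zero hdet fun i => by rw [hc, map_zero])

lemma disjoint_orthogonalBilin_of_gram_det_ne_zero
    (hdet : (Matrix.of fun i j => B (w i) (w j)).det ≠ 0) :
    Disjoint (Submodule.span K (Set.range w))
      ((Submodule.span K (Set.range w)).orthogonalBilin B) := by
  refine Submodule.disjoint_def.2 fun x hx hx_orth => ?_
  obtain ⟨c, rfl⟩ := (Submodule.mem_span_range_iff_exists_fun K).1 hx
  simp [eq_zero_of_gram_det_ne_zero hdet fun i => hx_orth _ (Submodule.subset_span ⟨i, rfl⟩)]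

end Gram

section GramCriterion

variable {𝕜 E : Type*} [RCLike 𝕜] [AddCommGroup E] [Module 𝕜 E]
  {B : E →ₗ⋆[𝕜] E →ₗ[𝕜] 𝕜} {s : E →ₗ⋆[𝕜] E} {g : ℕ → E} {k m : ℕ} {ε : 𝕜}

/-- The family `g 0, …, g (k - 1), ε • s (g 0), …, ε • s (g (k - 1))`, made of the leading columns
of the two blocks of a `Π^ε`-matrix. -/
def conjFamily (s : E →ₗ⋆[𝕜] E) (ε : 𝕜) (g : ℕ → E) (k : ℕ) : Fin k ⊕ Fin k → E :=
  Sum.elim (fun j => g j) fun j => ε • s (g j)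

lemma span_range_conjFamily (hε : ε ≠ 0) :
    Submodule.span 𝕜 (Set.range (conjFamily s ε g k)) = conjSpan s g k := by
  apply le_antisymm
  · rw [Submodule.span_le, Set.range_subset_iff, Sum.forall]
    exact ⟨fun j => mem_conjSpan j.2, fun j => Submodule.smul_mem _ ε (conj_mem_conjSpan j.2)⟩
  · exact conjSpan_le fun j hj => ⟨Submodule.subset_span ⟨Sum.inl (⟨j, hj⟩ : Fin k), rfl⟩,
      (Submodule.smul_mem_iff _ hε).1 (Submodule.subset_span ⟨Sum.inr (⟨j, hj⟩ : Fin k), rfl⟩)⟩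

lemma notMem_conjSpan_of_linearIndependent (hε : ε ≠ 0)
    (hli : LinearIndependent 𝕜 (conjFamily s ε g (k + 1))) : g k ∉ conjSpan s g k := fun hgk => by
  refine hli.notMem_span_image (s := {Sum.inl (Fin.last k)}ᶜ) (x := Sum.inl (Fin.last k))
    (by simp) ?_
  rw [← span_range_conjFamily hε] at hgk
  refine Submodule.span_mono ?_ hgk
  rintro _ ⟨j | j, rfl⟩
  · exact ⟨Sum.inl j.castSucc, by simp [j.castSucc_ne_last], rfl⟩
  · exact ⟨Sum.inr j.castSucc, by simp, rfl⟩

lemma IsGramSchmidtRegular.of_gram_det_ne_zero (hs : IsSkewConjugation B s)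
    (hdet : ∀ k < m, (Matrix.of fun i j =>
      B (conjFamily s ε g (k + 1) i) (conjFamily s ε g (k + 1) j)).det ≠ 0) :
    IsGramSchmidtRegular B s g m := by
  have hli := fun k hk => linearIndependent_of_gram_det_ne_zero (hdet k hk)
  have hε : ∀ k < m, ε ≠ 0 := fun k hk hε =>
    (hli k hk).ne_zero (Sum.inr (Fin.last k)) (by simp [conjFamily, hε])
  refine of_disjoint hs (fun k hk => ?_) fun k hk =>
    notMem_conjSpan_of_linearIndependent (hε k hk) (hli k hk)
  rw [← span_range_conjFamily (hε k hk)]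
  exact disjoint_orthogonalBilin_of_gram_det_ne_zero (hdet k hk)

end GramCriterion

section TriangularCongruence

variable {K α β γ ι : Type*} [Field K] [Fintype ι] {R : Matrix α β K} {e : ι → α} {f : ι → β}

lemma linearIndependent_col_of_rank_eq [Fintype β] (hR : R.rank = Fintype.card β) :
    LinearIndependent K R.col := by
  rw [linearIndependent_iff_card_eq_finrank_span, Set.finrank, ← rank_eq_finrank_span_cols, hR]

lemma linearIndependent_col_of_mul [Fintype α] {Q : Matrix γ α K}
    (h : LinearIndependent K (Q * R).col) : LinearIndependent K R.col :=
  LinearIndependent.of_comp Q.mulVecLin h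

lemma det_submatrix_ne_zero [DecidableEq ι] (hR : ∀ u ∉ Set.range e, ∀ t, R u (f t) = 0)
    (hli : LinearIndependent K fun t => R.col (f t)) : (R.submatrix e f).det ≠ 0 := fun hdet => by
  obtain ⟨c, hc, hRc⟩ := Matrix.exists_mulVec_eq_zero_iff.2 hdet
  have hcols : R.submatrix id f *ᵥ c = 0 := by
    funext u
    by_cases hu : u ∈ Set.range e
    · obtain ⟨v, rfl⟩ := hu
      exact congrFun hRc v
    · simp [Matrix.mulVec, dotProduct, hR u hu]
  exact hc (Matrix.mulVec_injective_iff.2 hli (hcols.trans (Matrix.mulVec_zero _).symm))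

variable [StarRing K] [Fintype α] [DecidableEq α] [DecidableEq ι] {δ : α → K}

lemma submatrix_conjTranspose_mul_diagonal_mul (he : Function.Injective e)
    (hR : ∀ u ∉ Set.range e, ∀ t, R u (f t) = 0) :
    (Rᴴ * diagonal δ * R).submatrix f f =
      (R.submatrix e f)ᴴ * diagonal (δ ∘ e) * R.submatrix e f := by
  ext s t
  rw [submatrix_apply, mul_apply, mul_apply]
  simp only [mul_diagonal]
  exact (Fintype.sum_of_injective e he _ (fun u => Rᴴ (f s) u * δ u * R u (f t))
    (fun u hu => by rw [hR u hu t, mul_zero]) fun _ => rfl).symm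

lemma det_submatrix_conjTranspose_mul_diagonal_mul_ne_zero (hδ : ∀ u, δ u ≠ 0)
    (he : Function.Injective e) (hR : ∀ u ∉ Set.range e, ∀ t, R u (f t) = 0)
    (hli : LinearIndependent K fun t => R.col (f t)) :
    ((Rᴴ * diagonal δ * R).submatrix f f).det ≠ 0 := by
  have hdet := det_submatrix_ne_zero hR hli
  rw [submatrix_conjTranspose_mul_diagonal_mul he hR, det_mul, det_mul, det_conjTranspose,
    det_diagonal]
  exact mul_ne_zero (mul_ne_zero (star_ne_zero.2 hdet) (Finset.prod_ne_zero_iff.2 fun i _ => hδ _))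
    hdet

end TriangularCongruence

section PiMatrices

variable {n m k : ℕ} {ε : ℂ}

/-- The conjugation `x ↦ Π x̄` of `ℂ^{2n}`, whose action on columns defines `Π`-matrices. -/
def piConj (n : ℕ) : (Fin n ⊕ Fin n → ℂ) →ₗ⋆[ℂ] (Fin n ⊕ Fin n → ℂ) :=
  (starLinearEquiv ℂ).toLinearMap ∘ₛₗ LinearMap.funLeft ℂ ℂ Sum.swap

@[simp]
lemma piConj_apply (x : Fin n ⊕ Fin n → ℂ) (u : Fin n ⊕ Fin n) :
    piConj n x u = star (x u.swap) := rfl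

lemma piMat_eq_submatrix_one :
    PiMat n = (1 : Matrix _ _ ℂ).submatrix (Equiv.sumComm _ _) (Equiv.refl _) := by
  ext (i | i) (j | j) <;> simp [PiMat, one_apply]

lemma isPiMat_iff {G : Matrix (Fin n ⊕ Fin n) (Fin m ⊕ Fin m) ℂ} :
    IsPiMat ε G ↔ ∀ t, G.col t.swap = ε • piConj n (G.col t) := by
  rw [IsPiMat, piMat_eq_submatrix_one, piMat_eq_submatrix_one, mul_submatrix_one,
    one_submatrix_mul, ← Matrix.ext_iff]
  simp only [funext_iff]
  exact forall_comm

lemma IsPiMat.of_mul {L Q : Matrix (Fin n ⊕ Fin n) (Fin n ⊕ Fin n) ℂ}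
    {R : Matrix (Fin n ⊕ Fin n) (Fin m ⊕ Fin m) ℂ} (hQ : IsPiMat 1 Q) (hLQ : L * Q = 1)
    (hQR : IsPiMat ε (Q * R)) : IsPiMat ε R := by
  have hmconj : mconj (Q * R) = mconj Q * mconj R := Matrix.map_mul
  calc R * PiMat m = L * (Q * R * PiMat m) := by
        rw [Matrix.mul_assoc Q, ← Matrix.mul_assoc L, hLQ, Matrix.one_mul]
    _ = ε • (L * (PiMat n * mconj Q) * mconj R) := by
        rw [hQR, hmconj, Matrix.mul_smul]
        simp only [Matrix.mul_assoc]
    _ = ε • (L * Q * (PiMat n * mconj R)) := by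
        rw [← one_smul ℂ (PiMat n * mconj Q), ← hQ]
        simp only [Matrix.mul_assoc]
    _ = ε • (PiMat n * mconj R) := by rw [hLQ, Matrix.one_mul]

lemma IsPiMat.isPiUpperTri {R : Matrix (Fin n ⊕ Fin n) (Fin m ⊕ Fin m) ℂ} (hR : IsPiMat ε R)
    (h₁ : ∀ (i : Fin n) (j : Fin m), (j : ℕ) < i → R (Sum.inl i) (Sum.inl j) = 0)
    (h₂ : ∀ (i : Fin n) (j : Fin m), (j : ℕ) ≤ i → R (Sum.inl i) (Sum.inr j) = 0) :
    IsPiUpperTri ε R := by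
  refine ⟨R.toBlocks₁₁, R.toBlocks₁₂, ?_, h₁, h₂⟩
  have hcol := isPiMat_iff.1 hR
  ext (i | i) (j | j)
  · rfl
  · rfl
  · exact congrFun (hcol (Sum.inr j)) (Sum.inr i)
  · exact congrFun (hcol (Sum.inl j)) (Sum.inr i)

/-- The embedding onto the first `k` indices of each of the two blocks. -/
def blockCastLE (h : k ≤ m) : Fin k ⊕ Fin k → Fin m ⊕ Fin m :=
  Sum.map (Fin.castLE h) (Fin.castLE h)

lemma blockCastLE_injective (h : k ≤ m) : Function.Injective (blockCastLE h) :=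
  Sum.map_injective.2 ⟨Fin.castLE_injective h, Fin.castLE_injective h⟩

lemma piLeadingMinor_eq_det_submatrix (M : Matrix (Fin m ⊕ Fin m) (Fin m ⊕ Fin m) ℂ)
    (h : k ≤ m) :
    piLeadingMinor M k h = (M.submatrix (blockCastLE h) (blockCastLE h)).det := by
  rw [piLeadingMinor]
  congr 1
  ext (i | i) (j | j) <;> rfl

lemma IsPiUpperTri.apply_blockCastLE_eq_zero {R : Matrix (Fin n ⊕ Fin n) (Fin m ⊕ Fin m) ℂ}
    (hR : IsPiUpperTri ε R) (hm : k ≤ m) (hn : k ≤ n) {u : Fin n ⊕ Fin n}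
    (hu : u ∉ Set.range (blockCastLE hn)) (t : Fin k ⊕ Fin k) : R u (blockCastLE hm t) = 0 := by
  obtain ⟨R₁, R₂, rfl, h₁, h₂⟩ := hR
  have hlt : ∀ i : Fin n, (u = Sum.inl i ∨ u = Sum.inr i) → ∀ j : Fin k, (j : ℕ) < i := by
    rintro i hi j
    by_contra! hij
    rcases hi with rfl | rfl
    · exact hu ⟨Sum.inl ⟨i, hij.trans_lt j.2⟩, rfl⟩
    · exact hu ⟨Sum.inr ⟨i, hij.trans_lt j.2⟩, rfl⟩
  rcases u with i | i <;> rcases t with j | j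
  · exact h₁ _ _ (hlt i (Or.inl rfl) j)
  · exact h₂ _ _ (hlt i (Or.inl rfl) j).le
  · simp [blockCastLE, mconj, h₂ i (Fin.castLE hm j) (hlt i (Or.inr rfl) j).le]
  · simp [blockCastLE, mconj, h₁ i (Fin.castLE hm j) (hlt i (Or.inr rfl) j)]

end PiMatrices

section GammaMatrices

variable {n : ℕ} {Γ : Matrix (Fin n ⊕ Fin n) (Fin n ⊕ Fin n) ℂ}

/-- The sesquilinear form `x, y ↦ xᴴ M y`. -/
def sesqForm {ι : Type*} [Fintype ι] [DecidableEq ι] (M : Matrix ι ι ℂ) :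
    (ι → ℂ) →ₗ⋆[ℂ] (ι → ℂ) →ₗ[ℂ] ℂ :=
  toLinearMapₛₗ₂' ℂ (starRingEnd ℂ) (RingHom.id ℂ) M

lemma conjTranspose_mul_mul_apply {ι α β : Type*} [Fintype ι] [DecidableEq ι] (M : Matrix ι ι ℂ)
    (X : Matrix ι α ℂ) (Y : Matrix ι β ℂ) (i : α) (j : β) :
    (Xᴴ * M * Y) i j = sesqForm M (X.col i) (Y.col j) := by
  simp only [sesqForm, toLinearMapₛₗ₂'_apply, mul_apply, conjTranspose_apply, Finset.sum_mul]
  rw [Finset.sum_comm]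
  refine Finset.sum_congr rfl fun u _ => Finset.sum_congr rfl fun v _ => ?_
  simp only [starRingEnd_apply, RingHom.id_apply, smul_eq_mul, col_apply]
  ring

lemma sesqForm_diagonal {ι : Type*} [Fintype ι] [DecidableEq ι] (δ x y : ι → ℂ) :
    sesqForm (diagonal δ) x y = ∑ u, star (x u) * δ u * y u := by
  simp [sesqForm, toLinearMapₛₗ₂'_apply, diagonal_apply, mul_assoc, mul_comm (y _)]

lemma IsGammaMat.exists_eq_diagonal (hΓ : IsGammaMat Γ) :
    ∃ δ : Fin n ⊕ Fin n → ℂ, Γ = diagonal δ ∧ (∀ u, δ u = 1 ∨ δ u = -1) ∧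
      ∀ u, δ u.swap = -δ u := by
  obtain ⟨d, hd, rfl⟩ := hΓ
  refine ⟨Sum.elim d fun i => -d i, by rw [diagonal_neg, fromBlocks_diagonal],
    Sum.forall.2 ⟨hd, fun i => ?_⟩, Sum.forall.2 ⟨fun _ => rfl, fun i => ?_⟩⟩
  · simpa [neg_eq_iff_eq_neg, or_comm] using hd i
  · simp

lemma IsGammaMat.mul_self (hΓ : IsGammaMat Γ) : Γ * Γ = 1 := by
  obtain ⟨δ, rfl, hδ, -⟩ := hΓ.exists_eq_diagonal
  rw [diagonal_mul_diagonal, ← diagonal_one]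
  congr 1
  funext u
  rcases hδ u with h | h <;> simp [h]

lemma IsGammaMat.isSkewConjugation (hΓ : IsGammaMat Γ) :
    IsSkewConjugation (sesqForm Γ) (piConj n) := by
  obtain ⟨δ, rfl, hδ, hδ_swap⟩ := hΓ.exists_eq_diagonal
  have hδ_star (u) : (starRingEnd ℂ) (δ u) = δ u := by rcases hδ u with h | h <;> simp [h]
  refine ⟨⟨fun x y => ?_⟩, fun x => ?_, fun x y => ?_⟩
  · simp only [sesqForm_diagonal, map_sum]
    exact Finset.sum_congr rfl fun u _ => by simp [hδ_star]; ring
  · funext u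
    simp
  · simp only [sesqForm_diagonal, star_sum, ← Finset.sum_neg_distrib]
    exact Fintype.sum_equiv (Equiv.sumComm _ _) _ _ fun u => by simp [hδ_swap, hδ_star]

lemma IsGammaMat.separatingLeft (hΓ : IsGammaMat Γ) : (sesqForm Γ).SeparatingLeft := by
  obtain ⟨δ, rfl, hδ, -⟩ := hΓ.exists_eq_diagonal
  intro x hx
  funext u
  have hδu : δ u ≠ 0 := by rcases hδ u with h | h <;> simp [h]
  simpa [sesqForm_diagonal, Pi.single_apply, hδu] using hx (Pi.single u 1)

/-- The `Π⁺`-matrix with columns `q i` and `Π q̄ i`. -/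
def piFrame (q : Fin n → Fin n ⊕ Fin n → ℂ) : Matrix (Fin n ⊕ Fin n) (Fin n ⊕ Fin n) ℂ :=
  (Matrix.of (Sum.elim q fun i => piConj n (q i)))ᵀ

lemma isPiMat_piFrame (q : Fin n → Fin n ⊕ Fin n → ℂ) : IsPiMat 1 (piFrame q) := by
  refine isPiMat_iff.2 (Sum.forall.2 ⟨fun i => ?_, fun i => ?_⟩) <;> funext u
  · rw [one_smul]
    rfl
  · simp [piFrame]

lemma IsGammaOrthonormal.isGammaMat {q : Fin n → Fin n ⊕ Fin n → ℂ}
    (hs : IsSkewConjugation (sesqForm Γ) (piConj n))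
    (hq : IsGammaOrthonormal (sesqForm Γ) (piConj n) q) :
    IsGammaMat ((piFrame q)ᴴ * Γ * piFrame q) := by
  have hqq (i j) : sesqForm Γ (q i) (q j) = diagonal (fun i => sesqForm Γ (q i) (q i)) i j := by
    rcases eq_or_ne i j with rfl | hij
    · rw [diagonal_apply_eq]
    · rw [diagonal_apply_ne _ hij]
      exact hq.isOrthoᵢ hij
  refine ⟨fun i => sesqForm Γ (q i) (q i), hq.apply_self, ?_⟩
  ext (i | i) (j | j) <;> rw [conjTranspose_mul_mul_apply]
  · exact hqq i j
  · exact hq.apply_conj i j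
  · exact hs.isSymm.isRefl _ _ (hq.apply_conj j i)
  · refine (hs.apply_conj_conj (q i) (q j)).trans (congrArg Neg.neg ?_)
    rw [← starRingEnd_apply, hs.isSymm.eq, hqq]
    exact congrFun₂ (diagonal_transpose fun i => sesqForm Γ (q i) (q i)) i j

end GammaMatrices

section Factorization

variable {n m : ℕ} {ε : ℂ} {Γ : Matrix (Fin n ⊕ Fin n) (Fin n ⊕ Fin n) ℂ}
  {G : Matrix (Fin n ⊕ Fin n) (Fin m ⊕ Fin m) ℂ}

lemma IsGammaQR.piLeadingMinor_ne_zero {Q : Matrix (Fin n ⊕ Fin n) (Fin n ⊕ Fin n) ℂ}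
    {R : Matrix (Fin n ⊕ Fin n) (Fin m ⊕ Fin m) ℂ} (hQR : IsGammaQR ε Γ G Q R) (hnm : m ≤ n)
    (hrank : G.rank = 2 * m) {k : ℕ} (hk : k ≤ m) : piLeadingMinor (Gᴴ * Γ * G) k hk ≠ 0 := by
  obtain ⟨rfl, -, hD, hR⟩ := hQR
  obtain ⟨δ, hδ_eq, hδ, -⟩ := hD.exists_eq_diagonal
  have congruence : (Q * R)ᴴ * Γ * (Q * R) = Rᴴ * diagonal δ * R := by
    rw [← hδ_eq, conjTranspose_mul]
    simp only [Matrix.mul_assoc]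
  have hli : LinearIndependent ℂ R.col := linearIndependent_col_of_mul <|
    linearIndependent_col_of_rank_eq (R := Q * R) (by simp [hrank, two_mul])
  rw [piLeadingMinor_eq_det_submatrix, congruence]
  exact det_submatrix_conjTranspose_mul_diagonal_mul_ne_zero
    (fun u => by rcases hδ u with h | h <;> simp [h]) (blockCastLE_injective (hk.trans hnm))
    (fun _ hu => hR.apply_blockCastLE_eq_zero hk (hk.trans hnm) hu)
    (hli.comp _ (blockCastLE_injective hk))

lemma IsPiMat.col_blockCastLE (hG : IsPiMat ε G) {g : ℕ → Fin n ⊕ Fin n → ℂ}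
    (hg : ∀ j : Fin m, g j = G.col (Sum.inl j)) {k : ℕ} (hk : k ≤ m) (t : Fin k ⊕ Fin k) :
    G.col (blockCastLE hk t) = conjFamily (piConj n) ε g k t := by
  rcases t with j | j
  · exact (hg (Fin.castLE hk j)).symm
  · exact (isPiMat_iff.1 hG (Sum.inl (Fin.castLE hk j))).trans
      (congrArg (fun x => ε • piConj n x) (hg (Fin.castLE hk j)).symm)

lemma IsPiMat.piLeadingMinor_eq_gram_det (hG : IsPiMat ε G) {g : ℕ → Fin n ⊕ Fin n → ℂ}
    (hg : ∀ j : Fin m, g j = G.col (Sum.inl j)) {k : ℕ} (hk : k ≤ m) :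
    piLeadingMinor (Gᴴ * Γ * G) k hk = (Matrix.of fun i j => sesqForm Γ
      (conjFamily (piConj n) ε g k i) (conjFamily (piConj n) ε g k j)).det := by
  rw [piLeadingMinor_eq_det_submatrix]
  congr 1
  ext i j
  rw [submatrix_apply, conjTranspose_mul_mul_apply, hG.col_blockCastLE hg, hG.col_blockCastLE hg,
    of_apply]

lemma IsGammaOrthonormal.exists_isGammaQR {q : Fin n → Fin n ⊕ Fin n → ℂ}
    (hq : IsGammaOrthonormal (sesqForm Γ) (piConj n) q) (hΓ : IsGammaMat Γ) (hG : IsPiMat ε G)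
    (hqG : ∀ (i : Fin n) (j : Fin m), (j : ℕ) < i → sesqForm Γ (q i) (G.col (Sum.inl j)) = 0)
    (hqG_conj : ∀ (i : Fin n) (j : Fin m), (j : ℕ) ≤ i →
      sesqForm Γ (q i) (G.col (Sum.inr j)) = 0) :
    ∃ Q R, IsGammaQR ε Γ G Q R := by
  have hD := hq.isGammaMat hΓ.isSkewConjugation
  have hQ := isPiMat_piFrame q
  set Q := piFrame q
  generalize hQD : Qᴴ * Γ * Q = D at hD
  have hinv : D * (Qᴴ * Γ) * Q = 1 := by rw [Matrix.mul_assoc, hQD, hD.mul_self]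
  have hQR : G = Q * (D * (Qᴴ * Γ) * G) := by
    rw [← Matrix.mul_assoc, mul_eq_one_comm.1 hinv, Matrix.one_mul]
  have hR (i t) (hit : sesqForm Γ (q i) (G.col t) = 0) :
      (D * (Qᴴ * Γ) * G) (Sum.inl i) t = 0 := by
    obtain ⟨δ, rfl, -⟩ := hD.exists_eq_diagonal
    rw [Matrix.mul_assoc, diagonal_mul, conjTranspose_mul_mul_apply]
    exact mul_eq_zero_of_right _ hit
  exact ⟨Q, D * (Qᴴ * Γ) * G, hQR, hQ, hQD ▸ hD, (hQ.of_mul hinv (hQR ▸ hG)).isPiUpperTri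
    (fun i j hij => hR i _ (hqG i j hij)) fun i j hij => hR i _ (hqG_conj i j hij)⟩

lemma IsPiMat.exists_isGammaQR (hG : IsPiMat ε G) (hΓ : IsGammaMat Γ) (hnm : m ≤ n)
    (hminor : ∀ (k : ℕ) (hk : k ≤ m), 1 ≤ k → piLeadingMinor (Gᴴ * Γ * G) k hk ≠ 0) :
    ∃ Q R, IsGammaQR ε Γ G Q R := by
  obtain ⟨g, hg⟩ : ∃ g : ℕ → Fin n ⊕ Fin n → ℂ, ∀ j : Fin m, g j = G.col (Sum.inl j) :=
    ⟨_, Fin.val_injective.extend_apply (fun j => G.col (Sum.inl j)) 0⟩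
  have hregular : IsGramSchmidtRegular (sesqForm Γ) (piConj n) g m :=
    .of_gram_det_ne_zero hΓ.isSkewConjugation fun k hk =>
      hG.piLeadingMinor_eq_gram_det hg hk ▸ hminor (k + 1) hk k.succ_pos
  obtain ⟨q, hq, hqg⟩ := exists_isGammaOrthonormal_of_le hΓ.isSkewConjugation hΓ.separatingLeft
    hregular hnm (by simp [two_mul])
  refine hq.exists_isGammaQR hΓ hG (fun i j hij => ?_) fun i j hij => ?_
  · rw [← hg j]
    exact (hqg i j j.2).1 hij
  · have hcol : G.col (Sum.inr j) = ε • piConj n (g j) :=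
      hg j ▸ isPiMat_iff.1 hG (Sum.inl j)
    rw [hcol, map_smul, (hqg i j j.2).2 hij, smul_zero]

theorem stmt6_general (hnm : m ≤ n) (hPi : IsPiMat ε G) (hrank : G.rank = 2 * m)
    (hΓ : IsGammaMat Γ) :
    (∃ Q R, IsGammaQR ε Γ G Q R) ↔
      ∀ (i : ℕ) (h : i ≤ m), 1 ≤ i → piLeadingMinor (Gᴴ * Γ * G) i h ≠ 0 :=
  ⟨fun ⟨_, _, hQR⟩ _ h _ => hQR.piLeadingMinor_ne_zero hnm hrank h,
    hPi.exists_isGammaQR hΓ hnm⟩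

end Factorization

/-- G has a ΓQR factorization with respect to Γ iff no Π⁻-leading
principal minor of GᴴΓG vanishes. -/
theorem stmt6 (n m : ℕ) (hm : 0 < m) (hnm : m ≤ n) (ε : ℂ) (hε : ε = 1 ∨ ε = -1)
    (G : Matrix (Fin n ⊕ Fin n) (Fin m ⊕ Fin m) ℂ)
    (hPi : IsPiMat ε G) (hrank : G.rank = 2 * m)
    (Γ : Matrix (Fin n ⊕ Fin n) (Fin n ⊕ Fin n) ℂ) (hΓ : IsGammaMat Γ) :
    (∃ Q R, IsGammaQR ε Γ G Q R) ↔
      (∀ (i : ℕ) (h : i ≤ m), 1 ≤ i → piLeadingMinor (Gᴴ * Γ * G) i h ≠ 0) :=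
  stmt6_general hnm hPi hrank hΓ

end
end

section
/- Let H be the Bethe–Salpeter matrix, let q₁ ∈ ℂ^{2n} and k ≥ 1 with n ≥ k+1. Suppose that K_{2k+2}(H, q₁) has full column rank, that no Π⁻-leading principal minor of K_{2k+2}(H, q₁)ᴴ·Γ₀·K_{2k+2}(H, q₁) vanishes, and let K_{2k+2}(H, q₁) = Q_{2k+2}·R_{2k+2} be a skinny ΓQR factorization with respect to Γ₀; write Q_{2k+2} = [U_k, u_{k+1}, Π·conj(U_k), Π·conj(u_{k+1})] with U_k ∈ ℂ^{2n×k}, u_{k+1} ∈ ℂ^{2n}, write Q_{2k+2}ᴴ·Γ₀·Q_{2k+2} = Γ_{2k+2} = diag(D_k, δ_{k+1}, −D_k, −δ_{k+1}) ∈ 𝔾_{2k+2}, and let Q_{2k} = [U_k, Π·conj(U_k)], Γ_{2k} = diag(D_k, −D_k), and let R_{2k} be the submatrix of R_{2k+2} obtained by deleting its (k+1)-th and (2k+2)-th rows and columns. Then: (i) R_{2k} is nonsingular; (ii) K_{2k}(H, q₁) = Q_{2k}·R_{2k}; (iii) Q_{2k}ᴴ·Γ₀·Q_{2k} = Γ_{2k};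 and (iv) Q_{2k}ᴴ·Γ₀·u_{k+1} = 0 and Q_{2k}ᴴ·Γ₀·Π·conj(u_{k+1}) = 0. -/
open Matrix Complex

noncomputable section

/-- The k-th order Π-Krylov matrix
K_{2k}(H, q) = [q, Hq, …, H^{k−1}q, Π·conj(q), …, Π·conj(H)^{k−1}·conj(q)]. -/
def KrylovMat {n : ℕ} (H : Matrix (Fin n ⊕ Fin n) (Fin n ⊕ Fin n) ℂ)
    (q : (Fin n ⊕ Fin n) → ℂ) (k : ℕ) :
    Matrix (Fin n ⊕ Fin n) (Fin k ⊕ Fin k) ℂ :=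
  Matrix.of fun i j =>
    Sum.elim (fun l : Fin k => (H ^ (l : ℕ)).mulVec q i)
      (fun l : Fin k => (PiMat n).mulVec (((mconj H) ^ (l : ℕ)).mulVec (star q)) i) j

/-- The Π⁺-matrix [q₁, …, q_m, Π·conj(q₁), …, Π·conj(q_m)] built from the columns q. -/
def QfromCols {n m : ℕ} (q : Fin m → (Fin n ⊕ Fin n) → ℂ) :
    Matrix (Fin n ⊕ Fin n) (Fin m ⊕ Fin m) ℂ :=
  Matrix.of fun i j =>
    Sum.elim (fun l : Fin m => q l i)
      (fun l : Fin m => (PiMat n).mulVec (star (q l)) i) j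

/-- The (2k+2)×2k matrix in ΓLan form with blocks T₁₁ (tridiagonal), T₂₁ (diagonal)
and scalar t: rows 1..k are [T₁₁, −conj T₂₁], row k+1 is [t·e_kᵀ, 0], rows k+2..2k+1
are [T₂₁, −conj T₁₁] and row 2k+2 is [0, −conj(t)·e_kᵀ]. -/
def gammaLanForm (k : ℕ) (T11 T21 : Matrix (Fin k) (Fin k) ℂ) (t : ℂ) :
    Matrix (Fin (k + 1) ⊕ Fin (k + 1)) (Fin k ⊕ Fin k) ℂ :=
  Matrix.of fun i j =>
    match i with
    | Sum.inl i' =>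
        if h : (i' : ℕ) < k then
          Sum.elim (fun j' => T11 ⟨i', h⟩ j')
            (fun j' => -(starRingEnd ℂ (T21 ⟨i', h⟩ j'))) j
        else
          Sum.elim (fun j' : Fin k => if (j' : ℕ) + 1 = k then t else 0)
            (fun _ => 0) j
    | Sum.inr i' =>
        if h : (i' : ℕ) < k then
          Sum.elim (fun j' => T21 ⟨i', h⟩ j')
            (fun j' => -(starRingEnd ℂ (T11 ⟨i', h⟩ j'))) j
        else
          Sum.elim (fun _ => 0)
            (fun j' : Fin k => if (j' : ℕ) + 1 = k then -(starRingEnd ℂ t) else 0) j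

/-- T₁₁ is tridiagonal. -/
def IsTridiagonal {k : ℕ} (T : Matrix (Fin k) (Fin k) ℂ) : Prop :=
  ∀ i j : Fin k, ((i : ℕ) + 1 < (j : ℕ) ∨ (j : ℕ) + 1 < (i : ℕ)) → T i j = 0

/-- A skinny ΓQR factorization (for Π⁺-matrices) of G with respect to Γ. -/
def IsSkinnyGammaQR {n m : ℕ} (Γ : Matrix (Fin n ⊕ Fin n) (Fin n ⊕ Fin n) ℂ)
    (G Q : Matrix (Fin n ⊕ Fin n) (Fin m ⊕ Fin m) ℂ)
    (R : Matrix (Fin m ⊕ Fin m) (Fin m ⊕ Fin m) ℂ) : Prop :=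
  G = Q * R ∧ IsPiMat 1 Q ∧ IsGammaMat (Qᴴ * Γ * Q) ∧ IsPiUpperTri 1 R

/-!
Truncating to leading columns commutes with every ingredient of the factorization `K = QR`. The
columns of `K_{2l}` are columns of `K_{2m}`, and the rows of `R` that are deleted vanish on the
retained columns, both blocks being upper triangular, so `K_{2l} = Q_{2l} R_{2l}`. Full column rank
of `K_{2l}` then forces `R_{2l}` to be nonsingular. The identities involving `Γ₀` are entries of the
diagonal Gram matrix `Qᴴ Γ₀ Q`, because `Π conj(u)` is itself a column of the Π⁺-matrix `Q`.
-/

section FieldRank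

variable {K ι κ κ' : Type*} [Field K] [Fintype κ]

theorem rank_eq_card_iff_linearIndependent_col (A : Matrix ι κ K) :
    A.rank = Fintype.card κ ↔ LinearIndependent K A.col := by
  rw [rank_eq_finrank_span_cols, linearIndependent_iff_card_eq_finrank_span, eq_comm, Set.finrank]

theorem rank_submatrix_id_eq_card [Fintype κ'] {A : Matrix ι κ K}
    (hA : A.rank = Fintype.card κ) {c : κ' → κ} (hc : Function.Injective c) :
    (A.submatrix id c).rank = Fintype.card κ' :=
  (rank_eq_card_iff_linearIndependent_col _).2
    (((rank_eq_card_iff_linearIndependent_col A).1 hA).comp c hc)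

theorem isUnit_det_right_of_rank_mul_eq_card [DecidableEq κ] {A : Matrix ι κ K}
    {B : Matrix κ κ K} (h : (A * B).rank = Fintype.card κ) : IsUnit B.det := by
  have hB : B.rank = Fintype.card κ :=
    B.rank_le_card_width.antisymm (h ▸ rank_mul_le_right A B)
  rw [← isUnit_iff_isUnit_det, ← linearIndependent_cols_iff_isUnit]
  exact (rank_eq_card_iff_linearIndependent_col B).1 hB

end FieldRank

theorem submatrix_mul_submatrix_of_injective {ι ι' κ κ' ν ν' S : Type*} [Fintype κ] [Fintype κ']
    [NonUnitalNonAssocSemiring S] (A : Matrix ι κ S) (B : Matrix κ ν S) (r : ι' → ι) {c : κ' → κ}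
    (e : ν' → ν) (hc : Function.Injective c)
    (hB : ∀ i ∉ Set.range c, ∀ j, B i (e j) = 0) :
    A.submatrix r c * B.submatrix c e = (A * B).submatrix r e := by
  ext i j
  simp only [mul_apply, submatrix_apply]
  exact Fintype.sum_of_injective c hc _ _ (fun x hx => by rw [hB x hx j, mul_zero]) fun _ => rfl

/-- The inclusion of the index set of a `2l`-dimensional block matrix into that of a
`2m`-dimensional one which keeps the first `l` indices of each of the two blocks. -/
abbrev leadingIndex {l m : ℕ} (h : l ≤ m) : Fin l ⊕ Fin l → Fin m ⊕ Fin m :=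
  Sum.map (Fin.castLE h) (Fin.castLE h)

section LeadingIndex

variable {l m : ℕ}

theorem leadingIndex_injective (h : l ≤ m) : Function.Injective (leadingIndex h) :=
  (Fin.castLE_injective h).sumMap (Fin.castLE_injective h)

theorem elim_val_leadingIndex_lt (h : l ≤ m) (i : Fin l ⊕ Fin l) :
    Sum.elim Fin.val Fin.val (leadingIndex h i) < l := by
  rcases i with i | i <;> exact i.isLt

theorem le_elim_val_of_notMem_range_leadingIndex {h : l ≤ m} {i : Fin m ⊕ Fin m}
    (hi : i ∉ Set.range (leadingIndex h)) : l ≤ Sum.elim Fin.val Fin.val i := by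
  contrapose! hi
  rcases i with i | i
  · exact ⟨Sum.inl ⟨i, hi⟩, rfl⟩
  · exact ⟨Sum.inr ⟨i, hi⟩, rfl⟩

end LeadingIndex

theorem IsPiUpperTri.apply_eq_zero {n m : ℕ} {ε : ℂ}
    {R : Matrix (Fin n ⊕ Fin n) (Fin m ⊕ Fin m) ℂ} (hR : IsPiUpperTri ε R)
    {i : Fin n ⊕ Fin n} {j : Fin m ⊕ Fin m}
    (hij : Sum.elim Fin.val Fin.val j < Sum.elim Fin.val Fin.val i) : R i j = 0 := by
  obtain ⟨R₁, R₂, rfl, h₁, h₂⟩ := hR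
  rcases i with i | i <;> rcases j with j | j
  · exact h₁ i j hij
  · exact h₂ i j (le_of_lt hij)
  · simp [mconj, h₂ i j (le_of_lt hij)]
  · simp [mconj, h₁ i j hij]

theorem PiMat_mulVec {n : ℕ} (v : Fin n ⊕ Fin n → ℂ) : PiMat n *ᵥ v = v ∘ Sum.swap := by
  ext (i | i) <;> simp [PiMat, fromBlocks_mulVec]

theorem mul_PiMat {n m : ℕ} (G : Matrix (Fin n ⊕ Fin n) (Fin m ⊕ Fin m) ℂ) :
    G * PiMat m = G.submatrix id Sum.swap := by
  rw [← G.fromBlocks_toBlocks, PiMat, fromBlocks_multiply]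
  ext (i | i) (j | j) <;> simp

theorem IsPiMat.col_inr {n m : ℕ} {ε : ℂ} {G : Matrix (Fin n ⊕ Fin n) (Fin m ⊕ Fin m) ℂ}
    (hG : IsPiMat ε G) (j : Fin m) :
    G.col (Sum.inr j) = ε • PiMat n *ᵥ star (G.col (Sum.inl j)) := by
  calc G.col (Sum.inr j) = (G * PiMat m).col (Sum.inl j) := by rw [mul_PiMat]; rfl
    _ = (ε • (PiMat n * mconj G)).col (Sum.inl j) := by rw [hG]
    _ = ε • PiMat n *ᵥ star (G.col (Sum.inl j)) := rfl

section Gram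

variable {n l m : ℕ} {Γ : Matrix (Fin n ⊕ Fin n) (Fin n ⊕ Fin n) ℂ}
  {Q : Matrix (Fin n ⊕ Fin n) (Fin m ⊕ Fin m) ℂ} {δ : Fin m → ℂ}

theorem fromBlocks_diagonal_neg_diagonal (δ : Fin m → ℂ) :
    fromBlocks (diagonal δ) 0 0 (-diagonal δ) = diagonal (Sum.elim δ (-δ)) := by
  rw [diagonal_neg, fromBlocks_diagonal]; rfl

theorem leading_conjTranspose_mul_mul_leading (h : l ≤ m)
    (hGram : Qᴴ * Γ * Q = fromBlocks (diagonal δ) 0 0 (-diagonal δ)) :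
    (Q.submatrix id (leadingIndex h))ᴴ * Γ * Q.submatrix id (leadingIndex h) =
      fromBlocks (diagonal (δ ∘ Fin.castLE h)) 0 0 (-diagonal (δ ∘ Fin.castLE h)) := by
  calc (Q.submatrix id (leadingIndex h))ᴴ * Γ * Q.submatrix id (leadingIndex h)
      = (Qᴴ * Γ * Q).submatrix (leadingIndex h) (leadingIndex h) := rfl
    _ = diagonal (Sum.elim δ (-δ) ∘ leadingIndex h) := by
      rw [hGram, fromBlocks_diagonal_neg_diagonal,
        submatrix_diagonal _ _ (leadingIndex_injective h)]
    _ = fromBlocks (diagonal (δ ∘ Fin.castLE h)) 0 0 (-diagonal (δ ∘ Fin.castLE h)) := by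
      rw [fromBlocks_diagonal_neg_diagonal, Sum.elim_comp_map]; rfl

theorem leading_conjTranspose_mulVec_col_eq_zero (h : l ≤ m)
    (hGram : Qᴴ * Γ * Q = fromBlocks (diagonal δ) 0 0 (-diagonal δ)) {j : Fin m ⊕ Fin m}
    (hj : l ≤ Sum.elim Fin.val Fin.val j) :
    (Q.submatrix id (leadingIndex h))ᴴ *ᵥ (Γ *ᵥ Q.col j) = 0 := by
  ext i
  have hij : leadingIndex h i ≠ j := by
    rintro rfl
    exact (elim_val_leadingIndex_lt h i).not_ge hj
  calc ((Q.submatrix id (leadingIndex h))ᴴ *ᵥ (Γ *ᵥ Q.col j)) i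
      = (Qᴴ * Γ * Q) (leadingIndex h i) j := by rw [mulVec_mulVec]; rfl
    _ = 0 := by rw [hGram, fromBlocks_diagonal_neg_diagonal, diagonal_apply_ne _ hij]

end Gram

section Krylov

variable {n l m : ℕ} {H : Matrix (Fin n ⊕ Fin n) (Fin n ⊕ Fin n) ℂ} {q : Fin n ⊕ Fin n → ℂ}

theorem KrylovMat_submatrix_leadingIndex (h : l ≤ m) :
    (KrylovMat H q m).submatrix id (leadingIndex h) = KrylovMat H q l := by
  ext i (j | j) <;> rfl

theorem rank_KrylovMat_of_le (h : l ≤ m) (hrank : (KrylovMat H q m).rank = 2 * m) :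
    (KrylovMat H q l).rank = 2 * l := by
  rw [← KrylovMat_submatrix_leadingIndex h,
    rank_submatrix_id_eq_card (by simp [hrank, two_mul]) (leadingIndex_injective h)]
  simp [two_mul]

end Krylov

theorem IsSkinnyGammaQR.leading_eq_mul {n l m : ℕ}
    {Γ : Matrix (Fin n ⊕ Fin n) (Fin n ⊕ Fin n) ℂ}
    {G Q : Matrix (Fin n ⊕ Fin n) (Fin m ⊕ Fin m) ℂ}
    {R : Matrix (Fin m ⊕ Fin m) (Fin m ⊕ Fin m) ℂ} (hQR : IsSkinnyGammaQR Γ G Q R) (h : l ≤ m) :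
    G.submatrix id (leadingIndex h) =
      Q.submatrix id (leadingIndex h) * R.submatrix (leadingIndex h) (leadingIndex h) := by
  obtain ⟨rfl, -, -, hR⟩ := hQR
  refine (submatrix_mul_submatrix_of_injective Q R id _ (leadingIndex_injective h) ?_).symm
  intro i hi j
  exact hR.apply_eq_zero ((elim_val_leadingIndex_lt h j).trans_le
    (le_elim_val_of_notMem_range_leadingIndex hi))

theorem stmt12_general {n l m : ℕ} (h : l ≤ m)
    {Γ H : Matrix (Fin n ⊕ Fin n) (Fin n ⊕ Fin n) ℂ} {q : Fin n ⊕ Fin n → ℂ}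
    (hrank : (KrylovMat H q l).rank = 2 * l)
    {Q : Matrix (Fin n ⊕ Fin n) (Fin m ⊕ Fin m) ℂ} {R : Matrix (Fin m ⊕ Fin m) (Fin m ⊕ Fin m) ℂ}
    (hQR : IsSkinnyGammaQR Γ (KrylovMat H q m) Q R) {δ : Fin m → ℂ}
    (hGram : Qᴴ * Γ * Q = fromBlocks (diagonal δ) 0 0 (-diagonal δ)) :
    IsUnit (R.submatrix (leadingIndex h) (leadingIndex h)).det ∧
    KrylovMat H q l =
      Q.submatrix id (leadingIndex h) * R.submatrix (leadingIndex h) (leadingIndex h) ∧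
    (Q.submatrix id (leadingIndex h))ᴴ * Γ * Q.submatrix id (leadingIndex h) =
      fromBlocks (diagonal (δ ∘ Fin.castLE h)) 0 0 (-diagonal (δ ∘ Fin.castLE h)) ∧
    ∀ j : Fin m, l ≤ j →
      (Q.submatrix id (leadingIndex h))ᴴ *ᵥ (Γ *ᵥ Q.col (Sum.inl j)) = 0 ∧
      (Q.submatrix id (leadingIndex h))ᴴ *ᵥ
        (Γ *ᵥ (PiMat n *ᵥ star (Q.col (Sum.inl j)))) = 0 := by
  have hfac : KrylovMat H q l =
      Q.submatrix id (leadingIndex h) * R.submatrix (leadingIndex h) (leadingIndex h) := by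
    rw [← hQR.leading_eq_mul h, KrylovMat_submatrix_leadingIndex]
  have hdet : IsUnit (R.submatrix (leadingIndex h) (leadingIndex h)).det := by
    refine isUnit_det_right_of_rank_mul_eq_card (A := Q.submatrix id (leadingIndex h)) ?_
    rw [← hfac, hrank, Fintype.card_sum, Fintype.card_fin, two_mul]
  refine ⟨hdet, hfac, leading_conjTranspose_mul_mul_leading h hGram, fun j hj => ⟨?_, ?_⟩⟩
  · exact leading_conjTranspose_mulVec_col_eq_zero h hGram hj
  · have hcol : PiMat n *ᵥ star (Q.col (Sum.inl j)) = Q.col (Sum.inr j) := by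
      rw [hQR.2.1.col_inr, one_smul]
    rw [hcol]
    exact leading_conjTranspose_mulVec_col_eq_zero h hGram hj

/-- relation between the skinny ΓQR factorizations of K_{2k+2}(H, q₁) and
K_{2k}(H, q₁). -/
theorem stmt12 (n k : ℕ) (hk : 1 ≤ k) (hn : k + 1 ≤ n)
    (A B : Matrix (Fin n) (Fin n) ℂ) (hA : Aᴴ = A) (hB : Bᵀ = B)
    (q₁ : (Fin n ⊕ Fin n) → ℂ)
    (hrank : (KrylovMat (BSmat A B) q₁ (k + 1)).rank = 2 * (k + 1))
    (hminor : ∀ (i : ℕ) (h : i ≤ k + 1), 1 ≤ i →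
      piLeadingMinor ((KrylovMat (BSmat A B) q₁ (k + 1))ᴴ * GammaZero n *
        KrylovMat (BSmat A B) q₁ (k + 1)) i h ≠ 0)
    (Q : Matrix (Fin n ⊕ Fin n) (Fin (k + 1) ⊕ Fin (k + 1)) ℂ)
    (R : Matrix (Fin (k + 1) ⊕ Fin (k + 1)) (Fin (k + 1) ⊕ Fin (k + 1)) ℂ)
    (hQR : IsSkinnyGammaQR (GammaZero n) (KrylovMat (BSmat A B) q₁ (k + 1)) Q R)
    (δ : Fin (k + 1) → ℂ) (hδ : ∀ j, δ j = 1 ∨ δ j = -1)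
    (hGam : Qᴴ * GammaZero n * Q =
      Matrix.fromBlocks (Matrix.diagonal δ) 0 0 (-(Matrix.diagonal δ))) :
    -- Q_{2k}, R_{2k} and u_{k+1} extracted from Q and R
    (IsUnit (R.submatrix (Sum.map Fin.castSucc Fin.castSucc)
        (Sum.map Fin.castSucc Fin.castSucc)).det) ∧
    (KrylovMat (BSmat A B) q₁ k =
      Q.submatrix id (Sum.map Fin.castSucc Fin.castSucc) *
        R.submatrix (Sum.map Fin.castSucc Fin.castSucc)
          (Sum.map Fin.castSucc Fin.castSucc)) ∧
    ((Q.submatrix id (Sum.map Fin.castSucc Fin.castSucc))ᴴ * GammaZero n *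
        Q.submatrix id (Sum.map Fin.castSucc Fin.castSucc) =
      Matrix.fromBlocks (Matrix.diagonal (δ ∘ Fin.castSucc)) 0 0
        (-(Matrix.diagonal (δ ∘ Fin.castSucc)))) ∧
    ((Q.submatrix id (Sum.map Fin.castSucc Fin.castSucc))ᴴ.mulVec
        ((GammaZero n).mulVec fun i => Q i (Sum.inl (Fin.last k))) = 0) ∧
    ((Q.submatrix id (Sum.map Fin.castSucc Fin.castSucc))ᴴ.mulVec
        ((GammaZero n).mulVec
          ((PiMat n).mulVec (star fun i => Q i (Sum.inl (Fin.last k))))) = 0) :=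
  have ⟨hdet, hfac, hgram, horth⟩ :=
    stmt12_general k.le_succ (rank_KrylovMat_of_le k.le_succ hrank) hQR hGam
  ⟨hdet, hfac, hgram, horth (Fin.last k) le_rfl⟩

end
end

section
/- Let H be the Bethe–Salpeter matrix with a ΓLan decomposition H·Q_{2k} = Q_{2k+2}·T̃_{2k}, where Q_{2k+2} = [q₁, …, q_{k+1}, Π·conj(q₁), …, Π·conj(q_{k+1})] ∈ ℂ^{2n×(2k+2)} satisfies Q_{2k+2}ᴴ·Γ₀·Q_{2k+2} ∈ 𝔾_{2k+2}, Q_{2k} consists of columns 1..k and k+2..2k+1 of Q_{2k+2}, and T̃_{2k} ∈ ℂ^{(2k+2)×2k} is in ΓLan form with blocks T₁₁, T₂₁, t. Set H₁₁ = [[T₁₁, −conj(T₂₁)],[T₂₁, −conj(T₁₁)]] ∈ ℂ^{2k×2k} and β_k = T̃_{2k}(k+1, k) = t. If H₁₁·x = ν·x with x ∈ ℂ^{2k} and ν ∈ ℂ, then H·Q_{2k}·x − ν·Q_{2k}·x = β_k·ξ_k·q_{k+1} − conj(β_k)·ξ_{2k}·Π·conj(q_{k+1}), where ξ_k and ξ_{2k}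 are the k-th and 2k-th entries of x. -/
open Matrix Complex

noncomputable section

/-!
Split off the last column of each half of `Q_{2k+2}` and the last row of each half of the ΓLan
matrix. The remaining rows form `H₁₁`, so they contribute `Q_{2k} H₁₁ x`, while each split-off row
has a single nonzero entry, in column `k` or `2k`. Hence, for every vector `x`, `H Q_{2k} x` and
`Q_{2k} H₁₁ x` differ by a combination of `q_{k+1}` and `Π conj(q_{k+1})` whose coefficients see
only the entries `ξ_k` and `ξ_{2k}`.
-/

section QfromCols

variable {n m : ℕ}

theorem QfromCols_mulVec (q : Fin m → Fin n ⊕ Fin n → ℂ) (y : Fin m ⊕ Fin m → ℂ) :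
    QfromCols q *ᵥ y =
      ∑ l, y (Sum.inl l) • q l + ∑ l, y (Sum.inr l) • PiMat n *ᵥ star (q l) := by
  rw [mulVec_eq_sum, Fintype.sum_sum_type]
  simp only [op_smul_eq_smul]
  rfl

theorem QfromCols_mulVec_eq_castSucc_add_last (q : Fin (m + 1) → Fin n ⊕ Fin n → ℂ)
    (y : Fin (m + 1) ⊕ Fin (m + 1) → ℂ) :
    QfromCols q *ᵥ y =
      QfromCols (q ∘ Fin.castSucc) *ᵥ (y ∘ Sum.map Fin.castSucc Fin.castSucc) +
        (y (Sum.inl (Fin.last m)) • q (Fin.last m) +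
          y (Sum.inr (Fin.last m)) • PiMat n *ᵥ star (q (Fin.last m))) := by
  simp only [QfromCols_mulVec, Fin.sum_univ_castSucc, Function.comp_apply, Sum.map_inl,
    Sum.map_inr]
  abel

end QfromCols

section gammaLanForm

variable {k : ℕ} (T₁₁ T₂₁ : Matrix (Fin k) (Fin k) ℂ) (t : ℂ)

theorem gammaLanForm_submatrix_castSucc :
    (gammaLanForm k T₁₁ T₂₁ t).submatrix (Sum.map Fin.castSucc Fin.castSucc) id =
      fromBlocks T₁₁ (-mconj T₂₁) T₂₁ (-mconj T₁₁) := by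
  ext (i | i) (j | j) <;> simp [gammaLanForm, mconj]

theorem gammaLanForm_inl_last {j : Fin k} (hj : (j : ℕ) + 1 = k) :
    gammaLanForm k T₁₁ T₂₁ t (Sum.inl (Fin.last k)) = Pi.single (Sum.inl j) t := by
  ext (l | l)
  · have hl : (l : ℕ) + 1 = k ↔ l = j := by lia
    simp [gammaLanForm, hl, Pi.single_apply]
  · simp [gammaLanForm]

theorem gammaLanForm_inr_last {j : Fin k} (hj : (j : ℕ) + 1 = k) :
    gammaLanForm k T₁₁ T₂₁ t (Sum.inr (Fin.last k)) =
      Pi.single (Sum.inr j) (-starRingEnd ℂ t) := by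
  ext (l | l)
  · simp [gammaLanForm]
  · have hl : (l : ℕ) + 1 = k ↔ l = j := by lia
    simp [gammaLanForm, hl, Pi.single_apply]

variable (x : Fin k ⊕ Fin k → ℂ)

theorem gammaLanForm_mulVec_comp_castSucc :
    (gammaLanForm k T₁₁ T₂₁ t *ᵥ x) ∘ Sum.map Fin.castSucc Fin.castSucc =
      fromBlocks T₁₁ (-mconj T₂₁) T₂₁ (-mconj T₁₁) *ᵥ x := by
  rw [← gammaLanForm_submatrix_castSucc T₁₁ T₂₁ t]
  rfl

theorem gammaLanForm_mulVec_inl_last {j : Fin k} (hj : (j : ℕ) + 1 = k) :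
    (gammaLanForm k T₁₁ T₂₁ t *ᵥ x) (Sum.inl (Fin.last k)) = t * x (Sum.inl j) := by
  rw [mulVec, gammaLanForm_inl_last T₁₁ T₂₁ t hj, single_dotProduct]

theorem gammaLanForm_mulVec_inr_last {j : Fin k} (hj : (j : ℕ) + 1 = k) :
    (gammaLanForm k T₁₁ T₂₁ t *ᵥ x) (Sum.inr (Fin.last k)) =
      -(starRingEnd ℂ t * x (Sum.inr j)) := by
  rw [mulVec, gammaLanForm_inr_last T₁₁ T₂₁ t hj, single_dotProduct, neg_mul]

end gammaLanForm

theorem stmt18_general {n k : ℕ} (hk : 1 ≤ k) (H : Matrix (Fin n ⊕ Fin n) (Fin n ⊕ Fin n) ℂ)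
    (q : Fin (k + 1) → Fin n ⊕ Fin n → ℂ) (T₁₁ T₂₁ : Matrix (Fin k) (Fin k) ℂ) (t : ℂ)
    (hdec : H * QfromCols (q ∘ Fin.castSucc) = QfromCols q * gammaLanForm k T₁₁ T₂₁ t)
    (x : Fin k ⊕ Fin k → ℂ) :
    H *ᵥ QfromCols (q ∘ Fin.castSucc) *ᵥ x -
        QfromCols (q ∘ Fin.castSucc) *ᵥ fromBlocks T₁₁ (-mconj T₂₁) T₂₁ (-mconj T₁₁) *ᵥ x =
      (t * x (Sum.inl ⟨k - 1, Nat.sub_lt hk one_pos⟩)) • q (Fin.last k) -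
        (starRingEnd ℂ t * x (Sum.inr ⟨k - 1, Nat.sub_lt hk one_pos⟩)) •
          PiMat n *ᵥ star (q (Fin.last k)) := by
  have hj : ((⟨k - 1, Nat.sub_lt hk one_pos⟩ : Fin k) : ℕ) + 1 = k := Nat.sub_add_cancel hk
  rw [mulVec_mulVec, hdec, ← mulVec_mulVec, QfromCols_mulVec_eq_castSucc_add_last,
    gammaLanForm_mulVec_comp_castSucc, add_sub_cancel_left,
    gammaLanForm_mulVec_inl_last T₁₁ T₂₁ t x hj, gammaLanForm_mulVec_inr_last T₁₁ T₂₁ t x hj,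
    neg_smul, ← sub_eq_add_neg]

/-- residual formula for Ritz pairs of H₁₁:
H·Q_{2k}·x − ν·Q_{2k}·x = β_k·ξ_k·q_{k+1} − conj(β_k)·ξ_{2k}·Π·conj(q_{k+1}). -/
theorem stmt18 (n k : ℕ) (hk : 1 ≤ k) (hn : k + 1 ≤ n)
    (A B : Matrix (Fin n) (Fin n) ℂ) (hA : Aᴴ = A) (hB : Bᵀ = B)
    (q : Fin (k + 1) → (Fin n ⊕ Fin n) → ℂ)
    (hGam : IsGammaMat ((QfromCols q)ᴴ * GammaZero n * QfromCols q))
    (T11 T21 : Matrix (Fin k) (Fin k) ℂ) (t : ℂ)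
    (hT11 : IsTridiagonal T11) (hT21 : T21.IsDiag)
    (hdec : BSmat A B * QfromCols (q ∘ Fin.castSucc) =
      QfromCols q * gammaLanForm k T11 T21 t)
    (x : (Fin k ⊕ Fin k) → ℂ) (ν : ℂ)
    (hx : (Matrix.fromBlocks T11 (-(mconj T21)) T21 (-(mconj T11))).mulVec x = ν • x) :
    (BSmat A B).mulVec ((QfromCols (q ∘ Fin.castSucc)).mulVec x) -
        ν • (QfromCols (q ∘ Fin.castSucc)).mulVec x =
      (t * x (Sum.inl ⟨k - 1, Nat.sub_lt hk one_pos⟩)) • q (Fin.last k) -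
        (starRingEnd ℂ t * x (Sum.inr ⟨k - 1, Nat.sub_lt hk one_pos⟩)) •
          (PiMat n).mulVec (star (q (Fin.last k))) := by
  rw [← mulVec_smul, ← hx]
  exact stmt18_general hk _ q T11 T21 t hdec x

end
end
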